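/- arXiv:1112.3255 — 2 statements merged into one kernel-verified Lean document; each statement's English description precedes it below -/
import Mathlib

section
/- Let W be a finite reflection group with root system Φ, a a generic point, Φ⁺ = {α ∈ Φ : ⟨a,α⟩ > 0}, and Δ a simple system for Φ⁺. Then every reflection s belonging to W is conjugate in W to a simple reflection: there exist w ∈ W and α ∈ Δ with s = w s_α w⁻¹. -/
/-!
The statement has two parts: a reflection `s ∈ W` is a reflection along some root, and every root
is carried by `W` to a simple root.

For the first part, consider the discriminant `P v = ∏_{γ ∈ Φ⁺} ⟪v, γ⟫`. Up to a constant sign it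
does not depend on which root is taken from each pair `±γ`. For a root `α`, pick `x ⊥ α` orthogonal
to no root other than `±α`; the system `{α} ∪ {γ ∈ Φ : ⟪x, γ⟫ > 0}` shows that `P ∘ s_α = -P`,
because `s_α` fixes `x` and hence permutes the second piece. As `W` is generated by the `s_α`, it
follows that `P (w v) = det w * P v` for `w ∈ W` (`rootProd_apply`). If `s ∈ W` is a reflection
along a vector `β` proportional to no root, then some `x ⊥ β` is orthogonal to no root, and
`P x = P (s x) = -P x` contradicts `P x ≠ 0` (`exists_root_of_reflection`).

For the second part, take in the `W`-orbit of a root a positive root `γ` with `⟪a, γ⟫` minimal.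
Expanding `⟪γ, γ⟫ > 0` along `Δ` yields `α ∈ Δ` with `⟪γ, α⟫ > 0`. Then `s_α γ` is lower than `γ`,
hence negative; comparing coefficients, `γ` is a multiple of `α`, so `γ = α`
(`exists_simple_in_orbit`).
-/

open scoped RealInnerProductSpace

variable {V : Type*} [NormedAddCommGroup V] [InnerProductSpace ℝ V]

/-- `s` acts as the orthogonal reflection along the nonzero vector `α`:
`s v = v - 2 (⟪v,α⟫/⟪α,α⟫) α`. -/
def IsReflAlong (s : V ≃ₗᵢ[ℝ] V) (α : V) : Prop :=
  α ≠ 0 ∧ ∀ v : V, s v = v - ((2 * ⟪v, α⟫ / ⟪α, α⟫) • α)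

/-- `s` is a reflection. -/
def IsReflection (s : V ≃ₗᵢ[ℝ] V) : Prop :=
  ∃ α : V, IsReflAlong s α

/-- A reflection group: a subgroup of the group of linear isometries of `V` generated by
the reflections it contains. -/
def IsReflectionGroup (W : Subgroup (V ≃ₗᵢ[ℝ] V)) : Prop :=
  W = Subgroup.closure {s | IsReflection s ∧ s ∈ W}

/-- `a` is a generic point for `W`: it is fixed by no reflection belonging to `W`. -/
def IsGeneric (W : Subgroup (V ≃ₗᵢ[ℝ] V)) (a : V) : Prop :=
  ∀ s ∈ W, IsReflection s → s a ≠ a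

/-- The `W`-orbit of the point `a`. -/
def orbitSet (W : Subgroup (V ≃ₗᵢ[ℝ] V)) (a : V) : Set V :=
  {x | ∃ w ∈ W, x = w a}

/-- The permutahedron `Perm^a(W)`: the convex hull of the `W`-orbit of `a`. -/
noncomputable def permutahedron (W : Subgroup (V ≃ₗᵢ[ℝ] V)) (a : V) : Set V :=
  convexHull ℝ (orbitSet W a)

/-- A root system for `W`. -/
structure IsRootSystem (W : Subgroup (V ≃ₗᵢ[ℝ] V)) (Φ : Set V) : Prop where
  finite : Φ.Finite
  nonempty : Φ.Nonempty
  ne_zero : ∀ α ∈ Φ, α ≠ 0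
  gen : W = Subgroup.closure {s | ∃ α ∈ Φ, IsReflAlong s α}
  line : ∀ α ∈ Φ, {β ∈ Φ | ∃ t : ℝ, β = t • α} = {α, -α}
  stable : ∀ w ∈ W, (⇑w) '' Φ = Φ

/-- The positive system determined by the generic point `a`: roots `α` with `⟪a, α⟫ > 0`. -/
def posSystem (a : V) (Φ : Set V) : Set V :=
  {α ∈ Φ | 0 < ⟪a, α⟫}

/-- `Δ` is a simple system for the positive system `Φp`: `Δ ⊆ Φp` is linearly independent and
every element of `Φp` is a linear combination of `Δ` with nonnegative coefficients. -/
def IsSimpleSystem (Φp Δ : Set V) : Prop :=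
  Δ ⊆ Φp ∧ LinearIndependent ℝ ((↑) : Δ → V) ∧
    ∀ β ∈ Φp, ∃ c : V →₀ ℝ, (c.support : Set V) ⊆ Δ ∧ (∀ v : V, 0 ≤ c v) ∧
      β = c.sum fun v r => r • v

/-- The subgroup generated by the reflections along the vectors of `I`. -/
def genSubgroup (I : Set V) : Subgroup (V ≃ₗᵢ[ℝ] V) :=
  Subgroup.closure {s | ∃ β ∈ I, IsReflAlong s β}

/-! ### Reflections -/

theorem isReflAlong_reflection {α : V} (h : α ≠ 0) :
    IsReflAlong (ℝ ∙ α)ᗮ.reflection α := by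
  refine ⟨h, fun v => ?_⟩
  rw [Submodule.reflection_orthogonal_apply, Submodule.reflection_singleton_apply,
    real_inner_comm, real_inner_self_eq_norm_sq, mul_div_assoc]
  simp only [RCLike.ofReal_real_eq_id, id]
  module

namespace IsReflAlong

theorem eq_reflection {s : V ≃ₗᵢ[ℝ] V} {α : V} (h : IsReflAlong s α) :
    s = (ℝ ∙ α)ᗮ.reflection := by
  ext v
  rw [h.2, (isReflAlong_reflection h.1).2]

theorem det {s : V ≃ₗᵢ[ℝ] V} {α : V} [FiniteDimensional ℝ V] (h : IsReflAlong s α) :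
    LinearMap.det (s.toLinearEquiv : V →ₗ[ℝ] V) = -1 := by
  rw [h.eq_reflection]
  have := Submodule.det_reflection (ℝ ∙ α)ᗮ
  rw [Submodule.orthogonal_orthogonal, finrank_span_singleton h.1, pow_one] at this
  exact this

theorem apply_self {s : V ≃ₗᵢ[ℝ] V} {α : V} (h : IsReflAlong s α) : s α = -α := by
  have h0 : ⟪α, α⟫ ≠ 0 := inner_self_ne_zero.mpr h.1
  rw [h.2, mul_div_assoc, div_self h0]
  module

theorem apply_of_orthogonal {s : V ≃ₗᵢ[ℝ] V} {α x : V} (h : IsReflAlong s α)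
    (hx : ⟪x, α⟫ = 0) : s x = x := by
  rw [h.2, hx]; simp

theorem apply_apply {s : V ≃ₗᵢ[ℝ] V} {α : V} (h : IsReflAlong s α) (v : V) : s (s v) = v := by
  rw [h.eq_reflection, Submodule.reflection_reflection]

theorem inner_apply_left {s : V ≃ₗᵢ[ℝ] V} {α : V} (h : IsReflAlong s α) (v w : V) :
    ⟪s v, w⟫ = ⟪v, s w⟫ := by
  rw [← s.inner_map_map v (s w), h.apply_apply]

theorem conj {s : V ≃ₗᵢ[ℝ] V} {α : V} (h : IsReflAlong s α) (u : V ≃ₗᵢ[ℝ] V) :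
    IsReflAlong (u * s * u⁻¹) (u α) := by
  refine ⟨by simpa using h.1, fun v => ?_⟩
  have hv : u (u⁻¹ v) = v := u.apply_symm_apply v
  change u (s (u⁻¹ v)) = _
  have h1 : ⟪u⁻¹ v, α⟫ = ⟪v, u α⟫ := by rw [← u.inner_map_map, hv]
  rw [h.2, map_sub, hv, map_smul, h1, u.inner_map_map]

theorem smul {s : V ≃ₗᵢ[ℝ] V} {α : V} (h : IsReflAlong s α) {t : ℝ} (ht : t ≠ 0) :
    IsReflAlong s (t • α) := by
  refine ⟨smul_ne_zero ht h.1, fun v => ?_⟩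
  have h0 : ⟪α, α⟫ ≠ 0 := inner_self_ne_zero.mpr h.1
  rw [h.2, smul_smul, inner_smul_right, inner_smul_right, real_inner_smul_left]
  congr 2
  field_simp

end IsReflAlong

/-! ### Products of linear forms and generic points of a hyperplane -/

/-- A hyperplane `β^⊥` contains a point outside any finite family of hyperplanes `γ^⊥` different
from it, since `β^⊥` is not a finite union of proper subspaces. -/
theorem exists_orthogonal_forall_inner_ne_zero (β : V) (F : Finset V)
    (hF : ∀ γ ∈ F, ¬ ∃ t : ℝ, γ = t • β) :
    ∃ x : V, ⟪x, β⟫ = 0 ∧ ∀ γ ∈ F, ⟪x, γ⟫ ≠ 0 := by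
  by_contra! hcon
  let U : Submodule ℝ V := (ℝ ∙ β)ᗮ
  let p : F → Subspace ℝ U := fun γ => LinearMap.ker ((innerₛₗ ℝ (γ : V)).comp U.subtype)
  have hcov : ⋃ i, (p i : Set U) = Set.univ := by
    refine Set.eq_univ_of_forall fun x => ?_
    have hx : ⟪(x : V), β⟫ = 0 := by
      rw [real_inner_comm]; exact Submodule.mem_orthogonal_singleton_iff_inner_right.mp x.2
    obtain ⟨γ, hγ, h0⟩ := hcon x hx
    refine Set.mem_iUnion.mpr ⟨⟨γ, hγ⟩, ?_⟩
    change ⟪γ, (x : V)⟫ = 0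
    rw [real_inner_comm, h0]
  obtain ⟨⟨γ, hγ⟩, htop⟩ := Subspace.exists_eq_top_of_iUnion_eq_univ hcov
  have hmem : γ ∈ Uᗮ := by
    rw [Submodule.mem_orthogonal']
    intro u hu
    have : (⟨u, hu⟩ : U) ∈ p ⟨γ, hγ⟩ := htop ▸ Submodule.mem_top
    exact this
  rw [Submodule.orthogonal_orthogonal, Submodule.mem_span_singleton] at hmem
  obtain ⟨t, ht⟩ := hmem
  exact hF γ hγ ⟨t, ht.symm⟩

/-- Replacing vectors by their negatives changes a product of linear forms by a constant factor:
if `A` and `B` both choose exactly one vector from each pair `±γ` of a common family, then the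
two products are proportional. -/
theorem exists_prod_inner_eq_mul (A B : Finset V)
    (hAB : ∀ γ ∈ A, γ ∈ B ∨ -γ ∈ B) (hBA : ∀ γ ∈ B, γ ∈ A ∨ -γ ∈ A)
    (hA : ∀ γ ∈ A, -γ ∉ A) (hB : ∀ γ ∈ B, -γ ∉ B) :
    ∃ ε : ℝ, ∀ v : V, ∏ γ ∈ A, ⟪v, γ⟫ = ε * ∏ γ ∈ B, ⟪v, γ⟫ := by
  classical
  let f : V → V := fun γ => if γ ∈ B then γ else -γ
  refine ⟨∏ γ ∈ A, (if γ ∈ B then (1 : ℝ) else -1), fun v => ?_⟩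
  have hf : ∏ γ ∈ A, ⟪v, f γ⟫ = ∏ γ ∈ B, ⟪v, γ⟫ := by
    refine Finset.prod_bij (fun γ _ => f γ) ?_ ?_ ?_ (fun _ _ => rfl)
    · intro γ hγ
      by_cases h : γ ∈ B
      · simp [f, h]
      · simpa [f, h] using hAB γ hγ
    · intro γ hγ δ hδ h
      by_cases h1 : γ ∈ B <;> by_cases h2 : δ ∈ B <;> simp only [f, h1, h2, if_true, if_false] at h
      · exact h
      · exact absurd (h ▸ hγ) (hA δ hδ)
      · exact absurd (h ▸ hδ) (hA γ hγ)
      · exact neg_injective h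
    · intro δ hδ
      rcases hBA δ hδ with h | h
      · exact ⟨δ, h, by simp [f, hδ]⟩
      · exact ⟨-δ, h, by simp [f, hB δ hδ]⟩
  rw [← hf, ← Finset.prod_mul_distrib]
  refine Finset.prod_congr rfl fun γ _ => ?_
  by_cases h : γ ∈ B <;> simp [f, h]

/-! ### Basic properties of root systems -/

namespace IsRootSystem

variable {W : Subgroup (V ≃ₗᵢ[ℝ] V)} {Φ : Set V}

theorem map_mem (hΦ : IsRootSystem W Φ) {w : V ≃ₗᵢ[ℝ] V} (hw : w ∈ W) {γ : V} (hγ : γ ∈ Φ) :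
    w γ ∈ Φ :=
  hΦ.stable w hw ▸ Set.mem_image_of_mem w hγ

theorem refl_mem (hΦ : IsRootSystem W Φ) {s : V ≃ₗᵢ[ℝ] V} {α : V} (hα : α ∈ Φ)
    (h : IsReflAlong s α) : s ∈ W := by
  rw [hΦ.gen]; exact Subgroup.subset_closure ⟨α, hα, h⟩

theorem neg_mem (hΦ : IsRootSystem W Φ) {γ : V} (hγ : γ ∈ Φ) : -γ ∈ Φ := by
  have : -γ ∈ ({γ, -γ} : Set V) := by simp
  rw [← hΦ.line γ hγ] at this
  exact this.1

theorem eq_or_eq_neg (hΦ : IsRootSystem W Φ) {α β : V} (hα : α ∈ Φ) (hβ : β ∈ Φ)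
    (h : ∃ t : ℝ, β = t • α) : β = α ∨ β = -α := by
  have : β ∈ {β ∈ Φ | ∃ t : ℝ, β = t • α} := ⟨hβ, h⟩
  rw [hΦ.line α hα] at this
  simpa using this

theorem inner_ne_zero (hΦ : IsRootSystem W Φ) {a : V} (ha : IsGeneric W a) {γ : V}
    (hγ : γ ∈ Φ) : ⟪a, γ⟫ ≠ 0 := by
  have hr := isReflAlong_reflection (hΦ.ne_zero γ hγ)
  exact fun h => ha _ (hΦ.refl_mem hγ hr) ⟨γ, hr⟩ (hr.apply_of_orthogonal h)

/-! ### The discriminant, and the reflections belonging to `W` -/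

open Classical in
/-- The roots having positive inner product with `x`, as a finset. -/
noncomputable def posFinset (hΦ : IsRootSystem W Φ) (x : V) : Finset V :=
  hΦ.finite.toFinset.filter fun γ => 0 < ⟪x, γ⟫

theorem mem_posFinset (hΦ : IsRootSystem W Φ) {x γ : V} :
    γ ∈ hΦ.posFinset x ↔ γ ∈ Φ ∧ 0 < ⟪x, γ⟫ := by
  simp [posFinset]

/-- The discriminant `v ↦ ∏_{γ ∈ Φ⁺} ⟪v, γ⟫`, with `Φ⁺` the positive system of `a`. -/
noncomputable def rootProd (hΦ : IsRootSystem W Φ) (a v : V) : ℝ :=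
  ∏ γ ∈ hΦ.posFinset a, ⟪v, γ⟫

/-- The discriminant changes sign under the reflection along a root. -/
theorem rootProd_reflection (hΦ : IsRootSystem W Φ) {a : V} (ha : IsGeneric W a)
    {s : V ≃ₗᵢ[ℝ] V} {α : V} (hα : α ∈ Φ) (hs : IsReflAlong s α) (v : V) :
    hΦ.rootProd a (s v) = -hΦ.rootProd a v := by
  classical
  obtain ⟨x, hxα, hx⟩ := exists_orthogonal_forall_inner_ne_zero α
    (hΦ.finite.toFinset.filter fun γ => ¬ ∃ t : ℝ, γ = t • α)
    (fun γ hγ => (Finset.mem_filter.mp hγ).2)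
  have hx' : ∀ γ ∈ Φ, γ = α ∨ γ = -α ∨ ⟪x, γ⟫ ≠ 0 := by
    intro γ hγ
    by_cases h : ∃ t : ℝ, γ = t • α
    · rcases hΦ.eq_or_eq_neg hα hγ h with h | h
      · exact Or.inl h
      · exact Or.inr (Or.inl h)
    · exact Or.inr (Or.inr (hx γ (by simpa [hγ] using h)))
  have hsx : s x = x := hs.apply_of_orthogonal hxα
  have hαnot : α ∉ hΦ.posFinset x := by simp [mem_posFinset, hxα]
  have hα0 : α ≠ -α := fun h => hΦ.inner_ne_zero ha hα (by
    have h' : ⟪a, α⟫ = -⟪a, α⟫ := by rw [← inner_neg_right, ← h]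
    linarith)
  -- Another choice of one root from each pair `±γ`, adapted to `α`.
  obtain ⟨ε, hε⟩ := exists_prod_inner_eq_mul (hΦ.posFinset a) (insert α (hΦ.posFinset x))
    (by
      intro γ hγ
      have hγ := (hΦ.mem_posFinset.mp hγ).1
      simp only [Finset.mem_insert, mem_posFinset, inner_neg_right, Left.neg_pos_iff]
      rcases hx' γ hγ with h | h | h
      · exact Or.inl (Or.inl h)
      · exact Or.inr (Or.inl (by rw [h, neg_neg]))
      · rcases lt_or_gt_of_ne h with h | h
        · exact Or.inr (Or.inr ⟨hΦ.neg_mem hγ, h⟩)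
        · exact Or.inl (Or.inr ⟨hγ, h⟩))
    (by
      intro γ hγ
      have hγ : γ ∈ Φ := by
        rcases Finset.mem_insert.mp hγ with h | h
        · exact h ▸ hα
        · exact (hΦ.mem_posFinset.mp h).1
      simp only [mem_posFinset, inner_neg_right, Left.neg_pos_iff]
      rcases lt_or_gt_of_ne (hΦ.inner_ne_zero ha hγ) with h | h
      · exact Or.inr ⟨hΦ.neg_mem hγ, h⟩
      · exact Or.inl ⟨hγ, h⟩)
    (by
      intro γ hγ
      simp only [mem_posFinset, inner_neg_right] at hγ ⊢
      exact fun h => by linarith [hγ.2, h.2])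
    (by
      intro γ hγ
      simp only [Finset.mem_insert, mem_posFinset, inner_neg_right] at hγ ⊢
      rintro (h | h) <;> rcases hγ with h' | h'
      · exact hα0 (by rw [← h', h, h'])
      · rw [← h, inner_neg_right] at hxα; linarith [h'.2]
      · rw [h', hxα] at h; simp at h
      · linarith [h'.2, h.2])
  have hperm : ∏ γ ∈ hΦ.posFinset x, ⟪s v, γ⟫ = ∏ γ ∈ hΦ.posFinset x, ⟪v, γ⟫ := by
    have hmem : ∀ γ ∈ hΦ.posFinset x, s γ ∈ hΦ.posFinset x := by
      intro γ hγ
      rw [mem_posFinset] at hγ ⊢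
      refine ⟨hΦ.map_mem (hΦ.refl_mem hα hs) hγ.1, ?_⟩
      rw [← hs.inner_apply_left, hsx]
      exact hγ.2
    exact Finset.prod_bij (fun γ _ => s γ) hmem (fun _ _ _ _ h => s.injective h)
      (fun γ hγ => ⟨s γ, hmem γ hγ, hs.apply_apply γ⟩)
      (fun γ _ => hs.inner_apply_left v γ)
  simp only [rootProd]
  rw [hε, hε, Finset.prod_insert hαnot, Finset.prod_insert hαnot, hperm, hs.inner_apply_left,
    hs.apply_self, inner_neg_right]
  ring

/-- The discriminant is a semi-invariant of `W` with character `det`. -/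
theorem rootProd_apply (hΦ : IsRootSystem W Φ) [FiniteDimensional ℝ V] {a : V}
    (ha : IsGeneric W a) {w : V ≃ₗᵢ[ℝ] V} (hw : w ∈ W) (v : V) :
    hΦ.rootProd a (w v) =
      LinearMap.det (w.toLinearEquiv : V →ₗ[ℝ] V) * hΦ.rootProd a v := by
  have hw' : w ∈ Subgroup.closure {s | ∃ α ∈ Φ, IsReflAlong s α} := by rwa [← hΦ.gen]
  have hmul : ∀ x y : V ≃ₗᵢ[ℝ] V, LinearMap.det ((x * y).toLinearEquiv : V →ₗ[ℝ] V) =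
      LinearMap.det (x.toLinearEquiv : V →ₗ[ℝ] V) *
        LinearMap.det (y.toLinearEquiv : V →ₗ[ℝ] V) := by
    intro x y
    rw [← LinearMap.det_comp]
    rfl
  have hone : LinearMap.det ((1 : V ≃ₗᵢ[ℝ] V).toLinearEquiv : V →ₗ[ℝ] V) = 1 :=
    LinearMap.det_id
  induction hw' using Subgroup.closure_induction generalizing v with
  | mem s hs =>
    obtain ⟨α, hα, h⟩ := hs
    rw [hΦ.rootProd_reflection ha hα h, h.det, neg_one_mul]
  | one => rw [hone, one_mul]; rfl
  | mul x y hx hy ihx ihy =>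
    rw [← hΦ.gen] at hx hy
    rw [hmul, mul_assoc, ← ihy hy, ← ihx hx]
    rfl
  | inv x hx ih =>
    rw [← hΦ.gen] at hx
    have h1 := ih hx (x⁻¹ v)
    have h2 : x (x⁻¹ v) = v := x.apply_symm_apply v
    have h3 := hmul x⁻¹ x
    rw [inv_mul_cancel, hone] at h3
    rw [h2] at h1
    rw [h1, ← mul_assoc, ← h3, one_mul]

/-- A reflection in `W` is a reflection along a root. -/
theorem exists_root_of_reflection (hΦ : IsRootSystem W Φ) [FiniteDimensional ℝ V] {a : V}
    (ha : IsGeneric W a) {s : V ≃ₗᵢ[ℝ] V} (hs : s ∈ W) (hsrefl : IsReflection s) :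
    ∃ γ ∈ Φ, IsReflAlong s γ := by
  obtain ⟨β, hβ⟩ := hsrefl
  by_contra! hcon
  obtain ⟨x, hxβ, hx⟩ := exists_orthogonal_forall_inner_ne_zero β hΦ.finite.toFinset (by
    rintro γ hγ ⟨t, rfl⟩
    have hγ : t • β ∈ Φ := by simpa using hγ
    refine hcon _ hγ (hβ.smul ?_)
    rintro rfl
    exact hΦ.ne_zero _ hγ (zero_smul _ _))
  have h1 := hΦ.rootProd_apply ha hs x
  rw [hβ.apply_of_orthogonal hxβ, hβ.det] at h1
  have h2 : hΦ.rootProd a x ≠ 0 := by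
    refine Finset.prod_ne_zero_iff.mpr fun γ hγ => hx γ ?_
    simpa using (hΦ.mem_posFinset.mp hγ).1
  exact h2 (by linarith)

/-! ### Orbits of roots meet the simple system -/

/-- If a positive root `γ` and a simple root `α` satisfy `γ - k α = -δ` with `δ` a positive root,
then `γ = α`: all coefficients of `γ` other than that at `α` vanish. -/
theorem eq_simple_of_add_eq_smul (hΦ : IsRootSystem W Φ) {a : V} {Δ : Set V}
    (hΔ : IsSimpleSystem (posSystem a Φ) Δ) {γ δ α : V} (hγ : γ ∈ posSystem a Φ)
    (hδ : δ ∈ posSystem a Φ) (hα : α ∈ Δ) {k : ℝ} (h : γ + δ = k • α) : γ = α := by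
  classical
  obtain ⟨hsub, hli, hcomb⟩ := hΔ
  obtain ⟨c, hcs, hc0, hc⟩ := hcomb γ hγ
  obtain ⟨d, hds, hd0, hd⟩ := hcomb δ hδ
  have hli' : LinearIndepOn ℝ id Δ := hli
  have key : c + d = Finsupp.single α k := by
    refine linearIndepOn_iffₛ.mp hli' _ (add_mem hcs hds) _
      (Finsupp.single_mem_supported ℝ k hα) ?_
    rw [map_add, Finsupp.linearCombination_single, Finsupp.linearCombination_apply,
      Finsupp.linearCombination_apply]
    simp only [id]
    rw [← hc, ← hd, h]
  have hc' : c = Finsupp.single α (c α) := by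
    ext v
    by_cases hv : v = α
    · simp [hv]
    · have := DFunLike.congr_fun key v
      rw [Finsupp.add_apply, Finsupp.single_eq_of_ne hv] at this
      rw [Finsupp.single_eq_of_ne hv]
      linarith [hc0 v, hd0 v]
  have hγα : γ = c α • α := by
    rw [hc, hc']; simp
  rcases hΦ.eq_or_eq_neg (hsub hα).1 hγ.1 ⟨_, hγα⟩ with h | h
  · exact h
  · have h1 := hγ.2
    have h2 := (hsub hα).2
    rw [h, inner_neg_right] at h1
    linarith

/-- Every root is carried to a simple root by some element of `W`. -/
theorem exists_simple_in_orbit (hΦ : IsRootSystem W Φ) {a : V} (ha : IsGeneric W a) {Δ : Set V}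
    (hΔ : IsSimpleSystem (posSystem a Φ) Δ) {β : V} (hβ : β ∈ Φ) :
    ∃ u ∈ W, u β ∈ Δ := by
  let S : Set V := {γ | γ ∈ posSystem a Φ ∧ ∃ u ∈ W, u β = γ}
  have hSfin : S.Finite := hΦ.finite.subset fun γ hγ => hγ.1.1
  have hSne : S.Nonempty := by
    rcases lt_or_gt_of_ne (hΦ.inner_ne_zero ha hβ) with h | h
    · have hr := isReflAlong_reflection (hΦ.ne_zero β hβ)
      exact ⟨-β, ⟨hΦ.neg_mem hβ, by simpa using h⟩, _, hΦ.refl_mem hβ hr, hr.apply_self⟩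
    · exact ⟨β, ⟨hβ, h⟩, 1, one_mem _, rfl⟩
  obtain ⟨γ, ⟨hγ, u, hu, huγ⟩, hmin⟩ := hSfin.exists_minimalFor (fun γ => ⟪a, γ⟫) S hSne
  obtain ⟨c, hcs, hc0, hc⟩ := hΔ.2.2 γ hγ
  have hex : ∃ α ∈ Δ, 0 < ⟪γ, α⟫ := by
    by_contra! hcon
    have h1 : ⟪γ, γ⟫ ≤ 0 := by
      conv_lhs => arg 3; rw [hc]
      rw [Finsupp.sum, inner_sum]
      refine Finset.sum_nonpos fun v hv => ?_
      rw [inner_smul_right]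
      exact mul_nonpos_of_nonneg_of_nonpos (hc0 v) (hcon v (hcs hv))
    exact hΦ.ne_zero γ hγ.1 (by simpa using h1)
  obtain ⟨α, hα, hpos⟩ := hex
  have hαΦ := hΔ.1 hα
  have hr := isReflAlong_reflection (hΦ.ne_zero α hαΦ.1)
  set r := (ℝ ∙ α)ᗮ.reflection
  have hrW := hΦ.refl_mem hαΦ.1 hr
  have hrγ : r γ ∈ Φ := hΦ.map_mem hrW hγ.1
  have hk : 0 < 2 * ⟪γ, α⟫ / ⟪α, α⟫ :=
    div_pos (by linarith) (real_inner_self_pos.mpr hr.1)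
  have hlt : ⟪a, r γ⟫ < ⟪a, γ⟫ := by
    rw [hr.2, inner_sub_right, inner_smul_right]
    linarith [mul_pos hk hαΦ.2]
  have hneg : -r γ ∈ posSystem a Φ := by
    refine ⟨hΦ.neg_mem hrγ, ?_⟩
    rw [inner_neg_right, Left.neg_pos_iff]
    refine lt_of_le_of_ne (not_lt.mp fun hp => ?_) (hΦ.inner_ne_zero ha hrγ)
    have hmem : r γ ∈ S := ⟨⟨hrγ, hp⟩, r * u, mul_mem hrW hu, by rw [← huγ]; rfl⟩
    exact absurd (hmin hmem hlt.le) (not_le.mpr hlt)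
  refine ⟨u, hu, ?_⟩
  rw [huγ, hΦ.eq_simple_of_add_eq_smul hΔ hγ hneg hα (k := 2 * ⟪γ, α⟫ / ⟪α, α⟫)
    (by rw [hr.2]; abel)]
  exact hα

end IsRootSystem

/-! ### Conjugacy to a simple reflection -/

/-- every reflection of `W` is conjugate in `W` to a simple reflection:
`s = w s_α w⁻¹` for some `w ∈ W` and `α ∈ Δ`, i.e. `w⁻¹ s w` is the reflection along `α`. -/
theorem reflection_conjugate_to_simple [FiniteDimensional ℝ V]
    (W : Subgroup (V ≃ₗᵢ[ℝ] V)) (hWfin : (W : Set (V ≃ₗᵢ[ℝ] V)).Finite)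
    (Φ : Set V) (hΦ : IsRootSystem W Φ) (a : V) (ha : IsGeneric W a)
    (Δ : Set V) (hΔ : IsSimpleSystem (posSystem a Φ) Δ)
    (s : V ≃ₗᵢ[ℝ] V) (hs : s ∈ W) (hsrefl : IsReflection s) :
    ∃ w ∈ W, ∃ α ∈ Δ, IsReflAlong (w⁻¹ * s * w) α := by
  obtain ⟨β, hβ, hsβ⟩ := hΦ.exists_root_of_reflection ha hs hsrefl
  obtain ⟨u, hu, huβ⟩ := hΦ.exists_simple_in_orbit ha hΔ hβ
  refine ⟨u⁻¹, inv_mem hu, u β, huβ, ?_⟩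
  rw [inv_inv]
  exact hsβ.conj u
end

section
/- Let W be a finite reflection group with root system Φ, a a generic point, Φ⁺ = {α ∈ Φ : ⟨a,α⟩ > 0}, and Δ a simple system for Φ⁺. Then W is generated by the set of simple reflections S = {s_α : α ∈ Δ}. -/
/-!
Let `H` be the subgroup generated by the simple reflections. Since `W` is generated by the
reflections in the roots, and `s_{-β} = s_β`, it is enough to show `s_β ∈ H` for every positive
root `β`. This is done by infinite descent on `⟪a, β⟫`, which takes finitely many values on `Φ`.

As `β` is a nonnegative combination of simple roots and `⟪β, β⟫ > 0`, some simple `α` has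
`⟪β, α⟫ > 0` (`exists_simple_inner_pos`). If `β` is not a multiple of `α`, then `s_α β` is again
positive: otherwise `β` and `-s_α β` would be nonnegative combinations of `Δ` whose sum is a
multiple of `α`, and linear independence of `Δ` forces `β ∈ ℝ α` (`eq_smul_of_add_eq_smul`).
Moreover `⟪a, s_α β⟫ < ⟪a, β⟫`, and `s_β` is the conjugate of `s_{s_α β}` by `s_α`.
-/

open scoped RealInnerProductSpace

variable {V : Type*} [NormedAddCommGroup V] [InnerProductSpace ℝ V]

lemma exists_isReflAlong {α : V} (hα : α ≠ 0) : ∃ s : V ≃ₗᵢ[ℝ] V, IsReflAlong s α := by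
  refine ⟨(ℝ ∙ α)ᗮ.reflection, hα, fun v => ?_⟩
  rw [Submodule.reflection_orthogonal_apply, Submodule.reflection_singleton_apply,
    real_inner_self_eq_norm_sq, real_inner_comm, neg_sub, ← Nat.cast_smul_eq_nsmul ℝ, smul_smul]
  congr 2
  simp [mul_div_assoc]

lemma IsReflAlong.neg {s : V ≃ₗᵢ[ℝ] V} {α : V} (h : IsReflAlong s α) : IsReflAlong s (-α) := by
  refine ⟨neg_ne_zero.2 h.1, fun v => ?_⟩
  rw [h.2 v]
  simp [neg_div]

lemma IsReflAlong.eq {s t : V ≃ₗᵢ[ℝ] V} {α : V} (hs : IsReflAlong s α) (ht : IsReflAlong t α) :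
    s = t := by
  ext v
  rw [hs.2, ht.2]

lemma IsReflAlong.conj_s6 {s : V ≃ₗᵢ[ℝ] V} {α : V} (h : IsReflAlong s α) (w : V ≃ₗᵢ[ℝ] V) :
    IsReflAlong (w * s * w⁻¹) (w α) := by
  refine ⟨fun h0 => h.1 (by simpa using h0), fun v => ?_⟩
  obtain ⟨u, rfl⟩ := w.surjective v
  have h1 : w⁻¹ (w u) = u := w.symm_apply_apply u
  have h2 : (w * s * w⁻¹) (w u) = w (s (w⁻¹ (w u))) := rfl
  rw [h2, h1, h.2, map_sub, map_smul, w.inner_map_map, w.inner_map_map]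

lemma IsRootSystem.neg_mem_s6 {W : Subgroup (V ≃ₗᵢ[ℝ] V)} {Φ : Set V} (hΦ : IsRootSystem W Φ)
    {α : V} (hα : α ∈ Φ) : -α ∈ Φ := by
  have h : -α ∈ {β ∈ Φ | ∃ t : ℝ, β = t • α} := by
    rw [hΦ.line α hα]
    simp
  exact h.1

lemma IsRootSystem.mem_of_isReflAlong {W : Subgroup (V ≃ₗᵢ[ℝ] V)} {Φ : Set V}
    (hΦ : IsRootSystem W Φ) {α : V} (hα : α ∈ Φ) {s : V ≃ₗᵢ[ℝ] V} (hs : IsReflAlong s α) :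
    s ∈ W := by
  rw [hΦ.gen]
  exact Subgroup.subset_closure ⟨α, hα, hs⟩

lemma IsRootSystem.inner_ne_zero_s6 {W : Subgroup (V ≃ₗᵢ[ℝ] V)} {Φ : Set V}
    (hΦ : IsRootSystem W Φ) {a : V} (ha : IsGeneric W a) {α : V} (hα : α ∈ Φ) :
    ⟪a, α⟫ ≠ 0 := by
  intro h
  obtain ⟨s, hs⟩ := exists_isReflAlong (hΦ.ne_zero α hα)
  refine ha s (hΦ.mem_of_isReflAlong hα hs) ⟨α, hs⟩ ?_
  rw [hs.2, h]
  simp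

lemma IsRootSystem.mem_posSystem_or_neg_mem {W : Subgroup (V ≃ₗᵢ[ℝ] V)} {Φ : Set V}
    (hΦ : IsRootSystem W Φ) {a : V} (ha : IsGeneric W a) {α : V} (hα : α ∈ Φ) :
    α ∈ posSystem a Φ ∨ -α ∈ posSystem a Φ := by
  rcases (hΦ.inner_ne_zero_s6 ha hα).lt_or_gt with h | h
  · exact Or.inr ⟨hΦ.neg_mem_s6 hα, by simpa using h⟩
  · exact Or.inl ⟨hα, h⟩

lemma exists_simple_inner_pos {Φp Δ : Set V} (hΔ : IsSimpleSystem Φp Δ) {β : V} (hβ : β ∈ Φp)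
    (h0 : β ≠ 0) : ∃ α ∈ Δ, 0 < ⟪β, α⟫ := by
  obtain ⟨c, hcΔ, hc, hsum⟩ := hΔ.2.2 β hβ
  by_contra! hcon
  have hpos : 0 < ⟪β, β⟫ := real_inner_self_pos.2 h0
  have hle : ⟪β, β⟫ ≤ 0 := by
    nth_rewrite 2 [hsum]
    rw [Finsupp.sum, inner_sum]
    refine Finset.sum_nonpos fun v hv => ?_
    rw [real_inner_smul_right]
    exact mul_nonpos_of_nonneg_of_nonpos (hc v) (hcon v (hcΔ hv))
  exact absurd hpos hle.not_gt

/-- A simple root spans an extremal ray of the cone generated by `Φp`. -/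
lemma eq_smul_of_add_eq_smul {Φp Δ : Set V} (hΔ : IsSimpleSystem Φp Δ) {α β γ : V}
    (hα : α ∈ Δ) (hβ : β ∈ Φp) (hγ : γ ∈ Φp) {k : ℝ} (h : β + γ = k • α) :
    ∃ t : ℝ, β = t • α := by
  obtain ⟨c, hcΔ, hc, hcs⟩ := hΔ.2.2 β hβ
  obtain ⟨d, hdΔ, hd, hds⟩ := hΔ.2.2 γ hγ
  have hli := hΔ.2.1
  rw [linearIndependent_subtype_iff, linearIndepOn_iff] at hli
  have hcd : c + d - Finsupp.single α k = 0 := by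
    apply hli
    · refine Submodule.sub_mem _ (Submodule.add_mem _ ?_ ?_) ?_
      · exact hcΔ
      · exact hdΔ
      · exact Finsupp.single_mem_supported ℝ k hα
    · rw [map_sub, map_add, Finsupp.linearCombination_single]
      simp only [Finsupp.linearCombination_apply, id]
      rw [← hcs, ← hds, h, sub_self]
  have hzero : ∀ v, v ≠ α → c v = 0 := by
    intro v hv
    have := DFunLike.congr_fun hcd v
    simp only [Finsupp.sub_apply, Finsupp.add_apply, Finsupp.single_eq_of_ne hv,
      Finsupp.zero_apply] at this
    linarith [hc v, hd v]
  refine ⟨c α, ?_⟩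
  rw [hcs]
  refine Finsupp.sum_eq_single α (fun v _ hv => ?_) (fun _ => zero_smul ℝ α)
  rw [hzero v hv, zero_smul]

/-- A simple reflection `s_α` keeps every positive root other than `α` positive. -/
lemma simple_reflection_mem_posSystem {W : Subgroup (V ≃ₗᵢ[ℝ] V)} {Φ : Set V}
    (hΦ : IsRootSystem W Φ) {a : V} (ha : IsGeneric W a) {Δ : Set V}
    (hΔ : IsSimpleSystem (posSystem a Φ) Δ) {α β : V} (hα : α ∈ Δ) (hβ : β ∈ posSystem a Φ)
    (hne : β ≠ α) {s : V ≃ₗᵢ[ℝ] V} (hs : IsReflAlong s α) : s β ∈ posSystem a Φ := by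
  have hαp := hΔ.1 hα
  have hsβ : s β ∈ Φ := by
    rw [← hΦ.stable s (hΦ.mem_of_isReflAlong hαp.1 hs)]
    exact Set.mem_image_of_mem _ hβ.1
  refine (hΦ.mem_posSystem_or_neg_mem ha hsβ).resolve_right fun hneg => ?_
  obtain ⟨t, ht⟩ := eq_smul_of_add_eq_smul (k := 2 * ⟪β, α⟫ / ⟪α, α⟫) hΔ hα hβ hneg
    (by rw [hs.2]; abel)
  have hmem : β ∈ ({α, -α} : Set V) := by
    rw [← hΦ.line α hαp.1]
    exact ⟨hβ.1, t, ht⟩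
  rcases hmem with h | h
  · exact hne h
  · have h1 := hβ.2
    have h2 := hαp.2
    rw [Set.mem_singleton_iff.1 h, inner_neg_right] at h1
    linarith

/-- Reflections along positive roots lie in the group generated by the simple reflections. -/
lemma pos_reflection_mem_closure {W : Subgroup (V ≃ₗᵢ[ℝ] V)} {Φ : Set V}
    (hΦ : IsRootSystem W Φ) {a : V} (ha : IsGeneric W a) {Δ : Set V}
    (hΔ : IsSimpleSystem (posSystem a Φ) Δ) {β : V} (hβ : β ∈ posSystem a Φ)
    {r : V ≃ₗᵢ[ℝ] V} (hr : IsReflAlong r β) :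
    r ∈ Subgroup.closure {s : V ≃ₗᵢ[ℝ] V | ∃ α ∈ Δ, IsReflAlong s α} := by
  set H := Subgroup.closure {s : V ≃ₗᵢ[ℝ] V | ∃ α ∈ Δ, IsReflAlong s α} with hH
  by_contra hrH
  -- Among the positive roots whose reflection is not in `H`, take one minimizing `⟪a, ·⟫`.
  let B : Set V := {γ ∈ posSystem a Φ | ∃ t : V ≃ₗᵢ[ℝ] V, IsReflAlong t γ ∧ t ∉ H}
  have hBfin : B.Finite := hΦ.finite.subset fun γ hγ => hγ.1.1
  obtain ⟨γ, ⟨hγ, t, ht, htH⟩, hmin⟩ :=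
    Set.exists_min_image B (fun v => ⟪a, v⟫) hBfin ⟨β, hβ, r, hr, hrH⟩
  obtain ⟨α, hα, hpos⟩ := exists_simple_inner_pos hΔ hγ ht.1
  have hαp := hΔ.1 hα
  obtain ⟨s, hs⟩ := exists_isReflAlong (hΦ.ne_zero α hαp.1)
  have hsH : s ∈ H := Subgroup.subset_closure ⟨α, hα, hs⟩
  have hne : γ ≠ α := by
    rintro rfl
    exact htH (ht.eq hs ▸ hsH)
  have hconj : s * t * s⁻¹ ∉ H := by
    rwa [H.mul_mem_cancel_right (H.inv_mem hsH), H.mul_mem_cancel_left hsH]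
  have hle := hmin (s γ)
    ⟨simple_reflection_mem_posSystem hΦ ha hΔ hα hγ hne hs, _, ht.conj_s6 s, hconj⟩
  simp only [hs.2 γ, inner_sub_right, real_inner_smul_right] at hle
  have hlt : 0 < 2 * ⟪γ, α⟫ / ⟪α, α⟫ * ⟪a, α⟫ :=
    mul_pos (div_pos (by linarith) (real_inner_self_pos.2 hs.1)) hαp.2
  linarith

/-- `W` is generated by the simple reflections `{s_α : α ∈ Δ}`. -/
theorem generated_by_simple_reflections [FiniteDimensional ℝ V]
    (W : Subgroup (V ≃ₗᵢ[ℝ] V)) (hWfin : (W : Set (V ≃ₗᵢ[ℝ] V)).Finite)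
    (Φ : Set V) (hΦ : IsRootSystem W Φ) (a : V) (ha : IsGeneric W a)
    (Δ : Set V) (hΔ : IsSimpleSystem (posSystem a Φ) Δ) :
    W = Subgroup.closure {s : V ≃ₗᵢ[ℝ] V | ∃ α ∈ Δ, IsReflAlong s α} := by
  apply le_antisymm
  · rw [hΦ.gen, Subgroup.closure_le]
    rintro s ⟨β, hβ, hs⟩
    rcases hΦ.mem_posSystem_or_neg_mem ha hβ with h | h
    · exact pos_reflection_mem_closure hΦ ha hΔ h hs
    · exact pos_reflection_mem_closure hΦ ha hΔ h hs.neg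
  · rw [Subgroup.closure_le]
    rintro s ⟨α, hα, hs⟩
    exact hΦ.mem_of_isReflAlong (hΔ.1 hα).1 hs
end
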